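/- arXiv:2010.07364 — 3 statements merged into one kernel-verified Lean document; each statement's English description precedes it below -/
import Mathlib

section
/- Let p be an odd prime and α ∈ ℚ_p a quadratic irrational with conjugate α^c whose BCF expansion is (eventually) periodic, i.e., there exist m ≥ 0 and N ≥ 1 with α_{m+N} = α_m. Then the expansion is purely periodic (there exists N ≥ 1 with α_N = α) if and only if α is regular, i.e., v_p(α) < 0 and v_p(α^c) > 0. -/
/-- `y ∈ 𝒴 = ℤ[1/p] ∩ (−p/2, p/2)`: a possible Browkin partial quotient. -/
def IsBrowkinDigit (p : ℕ) (y : ℚ) : Prop :=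
  (∃ z : ℤ, ∃ j : ℕ, y = (z : ℚ) / (p : ℚ) ^ j) ∧
  -(p : ℚ) / 2 < y ∧ y < (p : ℚ) / 2

/-- `αs` is the sequence of complete quotients and `a` the sequence of partial
quotients of the (non-terminating) Browkin continued fraction algorithm:
`a n = s (αs n)` (i.e. `a n ∈ 𝒴` and `|αs n − a n|_p < 1`) and
`αs (n+1) = 1/(αs n − a n)`. -/
def IsBCF (p : ℕ) [Fact p.Prime] (αs : ℕ → ℚ_[p]) (a : ℕ → ℚ) : Prop :=
  ∀ n, IsBrowkinDigit p (a n) ∧ ‖αs n - (a n : ℚ_[p])‖ < 1 ∧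
    αs (n + 1) = (αs n - (a n : ℚ_[p]))⁻¹

/-!
Write `xₙ` for the complete quotients, `yₙ` for their conjugates and `aₙ` for the digits. Since
`|xₙ| > 1` for `n ≥ 1` and `|aₙ| = |xₙ|` as soon as `|xₙ| > 1`, the condition `|yₙ| < 1` is
inherited by all later conjugates.

If the expansion is purely periodic, some `yₙ` satisfies `|yₙ| < 1`: otherwise the identity
`|xₙ₊₁ - yₙ₊₁| = |xₙ₊₁| |yₙ₊₁| |xₙ - yₙ|` makes `|xₙ - yₙ|` strictly increasing, against
periodicity. Going around the period brings the condition back to `y₀`.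

If `x₀` is regular, then all `|yₙ| < 1`, so `yₙ - aₙ = 1 / yₙ₊₁` makes `aₙ` the digit of
`-1 / yₙ₊₁`. The step is therefore invertible, and a period can be pushed back to the start.
-/

section Sequences

variable {X : Type*} {u : ℕ → X}

lemma periodic_of_eq_apply_zero (hu : ∀ m n, u m = u n → u (m + 1) = u (n + 1)) {N : ℕ}
    (hN : u N = u 0) : Function.Periodic u N := by
  intro n
  induction n with
  | zero => rwa [Nat.zero_add]
  | succ n ih => rw [Nat.add_right_comm, hu _ _ ih]

lemma eq_apply_zero_of_apply_add_eq (hu : ∀ m n, u (m + 1) = u (n + 1) → u m = u n) {m N : ℕ}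
    (hm : u (m + N) = u m) : u N = u 0 := by
  induction m with
  | zero => rwa [Nat.zero_add] at hm
  | succ m ih => exact ih (hu _ _ (by rwa [Nat.add_right_comm]))

end Sequences

/-- `x` and `y` are conjugate quadratic irrationals over the subfield `L`. In the inseparable case
`x = y` is allowed. -/
structure IsQuadraticConj {K : Type*} [Field K] (L : Subfield K) (x y : K) : Prop where
  notMem : x ∉ L
  trace_mem : x + y ∈ L
  norm_mem : x * y ∈ L

namespace IsQuadraticConj

variable {K : Type*} [Field K] {L : Subfield K} {x y z c : K}

lemma of_root {t q : K} (hx : x ∉ L) (ht : t ∈ L) (hq : q ∈ L) (hroot : x ^ 2 - t * x + q = 0) :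
    IsQuadraticConj L x (t - x) where
  notMem := hx
  trace_mem := by rwa [add_sub_cancel]
  norm_mem := by rwa [show x * (t - x) = q by linear_combination -hroot]

protected lemma symm (h : IsQuadraticConj L x y) : IsQuadraticConj L y x where
  notMem hy := h.notMem ((add_mem_cancel_right hy).1 h.trace_mem)
  trace_mem := add_comm x y ▸ h.trace_mem
  norm_mem := mul_comm x y ▸ h.norm_mem

protected lemma sub_ne_zero (h : IsQuadraticConj L x y) (hc : c ∈ L) : x - c ≠ 0 :=
  sub_ne_zero.2 fun hxc ↦ h.notMem (hxc ▸ hc)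

protected lemma ne_zero (h : IsQuadraticConj L x y) : x ≠ 0 :=
  fun hx ↦ h.notMem (hx ▸ L.zero_mem)

protected lemma ne (h : IsQuadraticConj L x y) (two_ne_zero : (2 : K) ≠ 0) : x ≠ y := by
  rintro rfl
  have hx : (x + x) / 2 ∈ L := div_mem h.trace_mem (ofNat_mem L 2)
  rw [← two_mul, mul_div_cancel_left₀ x two_ne_zero] at hx
  exact h.notMem hx

lemma right_unique (hy : IsQuadraticConj L x y) (hz : IsQuadraticConj L x z) : y = z := by
  by_contra hyz
  have hsub : y - z ∈ L := by
    simpa only [add_sub_add_left_eq_sub] using sub_mem hy.trace_mem hz.trace_mem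
  have hmul : x * (y - z) ∈ L := mul_sub x y z ▸ sub_mem hy.norm_mem hz.norm_mem
  have hx : x * (y - z) / (y - z) ∈ L := div_mem hmul hsub
  rw [mul_div_cancel_right₀ x (sub_ne_zero.2 hyz)] at hx
  exact hy.notMem hx

lemma sub_right (h : IsQuadraticConj L x y) (hc : c ∈ L) :
    IsQuadraticConj L (x - c) (y - c) where
  notMem hx := h.notMem (sub_add_cancel x c ▸ add_mem hx hc)
  trace_mem := by
    rw [sub_add_sub_comm]
    exact sub_mem h.trace_mem (add_mem hc hc)
  norm_mem := by
    rw [show (x - c) * (y - c) = x * y - c * (x + y) + c * c by ring]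
    exact add_mem (sub_mem h.norm_mem (mul_mem hc h.trace_mem)) (mul_mem hc hc)

protected lemma inv (h : IsQuadraticConj L x y) : IsQuadraticConj L x⁻¹ y⁻¹ where
  notMem hx := h.notMem (inv_mem_iff.1 hx)
  trace_mem := by
    rw [inv_add_inv h.ne_zero h.symm.ne_zero]
    exact div_mem h.trace_mem h.norm_mem
  norm_mem := mul_inv x y ▸ inv_mem h.norm_mem

end IsQuadraticConj

section Ultrametric

variable {E : Type*} [SeminormedAddCommGroup E] [IsUltrametricDist E] {x y z : E} {r : ℝ}

lemma norm_sub_lt_of_norm_lt (hx : ‖x‖ < r) (hy : ‖y‖ < r) : ‖x - y‖ < r := by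
  rw [sub_eq_add_neg]
  exact (IsUltrametricDist.norm_add_le_max x (-y)).trans_lt (max_lt hx (by rwa [norm_neg]))

lemma norm_sub_eq_norm_right_of_lt (h : ‖x‖ < ‖y‖) : ‖x - y‖ = ‖y‖ := by
  rw [sub_eq_add_neg, IsUltrametricDist.norm_add_eq_max_of_norm_ne_norm (norm_neg y ▸ h.ne),
    norm_neg, max_eq_right h.le]

end Ultrametric

/-- A continued fraction expansion of a quadratic irrational over `L`, where `x` are the complete
quotients, `y` their conjugates and `a` the partial quotients, taken from `L` and congruent to the
complete quotients modulo the maximal ideal. How congruent partial quotients are related is left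
open, so that the notion covers every choice of digits. -/
structure IsQuadraticExpansion {K : Type*} [NormedField K] (L : Subfield K) (x y a : ℕ → K) :
    Prop where
  isQuadraticConj_zero : IsQuadraticConj L (x 0) (y 0)
  partialQuotient_mem : ∀ n, a n ∈ L
  norm_sub_lt_one : ∀ n, ‖x n - a n‖ < 1
  left_succ : ∀ n, x (n + 1) = (x n - a n)⁻¹
  right_succ : ∀ n, y (n + 1) = (y n - a n)⁻¹

namespace IsQuadraticExpansion

variable {K : Type*} [NormedField K] {L : Subfield K} {x y a : ℕ → K}

lemma isQuadraticConj (h : IsQuadraticExpansion L x y a) (n : ℕ) :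
    IsQuadraticConj L (x n) (y n) := by
  induction n with
  | zero => exact h.isQuadraticConj_zero
  | succ n ih =>
    rw [h.left_succ, h.right_succ]
    exact (ih.sub_right (h.partialQuotient_mem n)).inv

lemma right_eq_of_left_eq (h : IsQuadraticExpansion L x y a) {m n : ℕ} (hmn : x m = x n) :
    y m = y n :=
  (h.isQuadraticConj m).right_unique (hmn ▸ h.isQuadraticConj n)

lemma left_ne_right (h : IsQuadraticExpansion L x y a) (hne : x 0 ≠ y 0) (n : ℕ) : x n ≠ y n := by
  induction n with
  | zero => exact hne
  | succ n ih => rwa [h.left_succ, h.right_succ, Ne, inv_inj, sub_left_inj]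

lemma one_lt_norm_left_succ (h : IsQuadraticExpansion L x y a) (n : ℕ) : 1 < ‖x (n + 1)‖ := by
  have hpos : 0 < ‖x n - a n‖ :=
    norm_pos_iff.2 ((h.isQuadraticConj n).sub_ne_zero (h.partialQuotient_mem n))
  rw [h.left_succ, norm_inv]
  exact (one_lt_inv₀ hpos).2 (h.norm_sub_lt_one n)

lemma one_lt_norm_left (h : IsQuadraticExpansion L x y a) (hx : 1 < ‖x 0‖) : ∀ n, 1 < ‖x n‖
  | 0 => hx
  | n + 1 => h.one_lt_norm_left_succ n

lemma norm_left_sub_right_succ (h : IsQuadraticExpansion L x y a) (n : ℕ) :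
    ‖x (n + 1) - y (n + 1)‖ = ‖x (n + 1)‖ * ‖y (n + 1)‖ * ‖x n - y n‖ := by
  have hx := (h.isQuadraticConj n).sub_ne_zero (h.partialQuotient_mem n)
  have hy := (h.isQuadraticConj n).symm.sub_ne_zero (h.partialQuotient_mem n)
  rw [h.left_succ, h.right_succ, inv_sub_inv' hx hy, sub_sub_sub_cancel_right, norm_mul, norm_mul,
    norm_sub_rev (y n), mul_right_comm]

lemma exists_norm_right_lt_one (h : IsQuadraticExpansion L x y a) (hne : x 0 ≠ y 0) {N : ℕ}
    (hN : 0 < N) (hperiod : x N = x 0) : ∃ n, ‖y n‖ < 1 := by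
  by_contra! hy
  have hmono : StrictMono fun n ↦ ‖x n - y n‖ := strictMono_nat_of_lt_succ fun n ↦ by
    rw [h.norm_left_sub_right_succ]
    have hpos : 0 < ‖x n - y n‖ := norm_pos_iff.2 (sub_ne_zero.2 (h.left_ne_right hne n))
    exact lt_mul_of_one_lt_left hpos
      (one_lt_mul_of_lt_of_le (h.one_lt_norm_left_succ n) (hy (n + 1)))
  exact (hmono hN).ne' (by simp only [hperiod, h.right_eq_of_left_eq hperiod])

variable [IsUltrametricDist K]

lemma norm_right_succ_lt_one (h : IsQuadraticExpansion L x y a) {n : ℕ} (hx : 1 < ‖x n‖)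
    (hy : ‖y n‖ < 1) : ‖y (n + 1)‖ < 1 := by
  have ha : 1 < ‖a n‖ := by
    have := norm_sub_eq_norm_right_of_lt ((h.norm_sub_lt_one n).trans hx)
    rw [sub_sub_cancel_left, norm_neg] at this
    rwa [this]
  rw [h.right_succ, norm_inv, norm_sub_eq_norm_right_of_lt (hy.trans ha)]
  exact inv_lt_one_of_one_lt₀ ha

lemma norm_right_lt_one_of_le (h : IsQuadraticExpansion L x y a) (hx : 1 < ‖x 0‖) {m n : ℕ}
    (hmn : m ≤ n) (hm : ‖y m‖ < 1) : ‖y n‖ < 1 := by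
  induction n, hmn using Nat.le_induction with
  | base => exact hm
  | succ n _ ih => exact h.norm_right_succ_lt_one (h.one_lt_norm_left hx n) ih

lemma left_succ_eq_of_left_eq (h : IsQuadraticExpansion L x y a)
    (hsep : ∀ m n, ‖a m - a n‖ < 1 → a m = a n) {m n : ℕ} (hmn : x m = x n) :
    x (m + 1) = x (n + 1) := by
  have ha : a m = a n := hsep m n <| by
    rw [← sub_sub_sub_cancel_left (a n) (a m) (x n)]
    exact norm_sub_lt_of_norm_lt (h.norm_sub_lt_one n) (hmn ▸ h.norm_sub_lt_one m)
  rw [h.left_succ, h.left_succ, hmn, ha]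

lemma left_eq_of_left_succ_eq (h : IsQuadraticExpansion L x y a)
    (hsep : ∀ m n, ‖a m - a n‖ < 1 → a m = a n) {m n : ℕ} (hm : ‖y m‖ < 1) (hn : ‖y n‖ < 1)
    (hmn : x (m + 1) = x (n + 1)) : x m = x n := by
  have hy : y m - a m = y n - a n := by
    simpa only [h.right_succ, inv_inj] using h.right_eq_of_left_eq hmn
  have ha : a m = a n := hsep m n <| by
    rw [← sub_eq_sub_iff_sub_eq_sub.1 hy]
    exact norm_sub_lt_of_norm_lt hm hn
  rwa [h.left_succ, h.left_succ, inv_inj, ha, sub_left_inj] at hmn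

lemma regular_of_purely_periodic (h : IsQuadraticExpansion L x y a)
    (hsep : ∀ m n, ‖a m - a n‖ < 1 → a m = a n) (hne : x 0 ≠ y 0) {N : ℕ} (hN : 0 < N)
    (hperiod : x N = x 0) : 1 < ‖x 0‖ ∧ ‖y 0‖ < 1 := by
  have hx : 1 < ‖x 0‖ := by
    obtain ⟨k, rfl⟩ := Nat.exists_eq_add_one.2 hN
    exact hperiod ▸ h.one_lt_norm_left_succ k
  have hperiodic : Function.Periodic x N :=
    periodic_of_eq_apply_zero (u := x) (fun _ _ ↦ h.left_succ_eq_of_left_eq hsep) hperiod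
  obtain ⟨n, hn⟩ := h.exists_norm_right_lt_one hne hN hperiod
  have hlater : ‖y (n * N)‖ < 1 :=
    h.norm_right_lt_one_of_le hx (Nat.le_mul_of_pos_right n hN) hn
  exact ⟨hx, h.right_eq_of_left_eq (hperiodic.nat_mul_eq n) ▸ hlater⟩

lemma purely_periodic_of_regular (h : IsQuadraticExpansion L x y a)
    (hsep : ∀ m n, ‖a m - a n‖ < 1 → a m = a n) (hx : 1 < ‖x 0‖) (hy : ‖y 0‖ < 1) {m N : ℕ}
    (hperiod : x (m + N) = x m) : x N = x 0 :=
  have hall (n : ℕ) : ‖y n‖ < 1 := h.norm_right_lt_one_of_le hx n.zero_le hy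
  eq_apply_zero_of_apply_add_eq
    (fun m n ↦ h.left_eq_of_left_succ_eq hsep (hall m) (hall n)) hperiod

end IsQuadraticExpansion

theorem browkin_purely_periodic_iff_regular_general {K : Type*} [NormedField K]
    [IsUltrametricDist K] {L : Subfield K} {x y a : ℕ → K} (h : IsQuadraticExpansion L x y a)
    (hsep : ∀ m n, ‖a m - a n‖ < 1 → a m = a n) (hne : x 0 ≠ y 0)
    (hper : ∃ m N : ℕ, 1 ≤ N ∧ x (m + N) = x m) :
    (∃ N : ℕ, 1 ≤ N ∧ x N = x 0) ↔ 1 < ‖x 0‖ ∧ ‖y 0‖ < 1 := by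
  constructor
  · rintro ⟨N, hN, hperiod⟩
    exact h.regular_of_purely_periodic hsep hne hN hperiod
  · rintro ⟨hx, hy⟩
    obtain ⟨m, N, hN, hperiod⟩ := hper
    exact ⟨N, hN, h.purely_periodic_of_regular hsep hx hy hperiod⟩

section Padic

variable {p : ℕ} [Fact p.Prime]

lemma padic_one_lt_norm_iff_valuation_neg {x : ℚ_[p]} : 1 < ‖x‖ ↔ x.valuation < 0 := by
  rw [← not_le, Padic.norm_le_one_iff_val_nonneg, not_le]

lemma padic_norm_lt_one_iff_valuation_pos {x : ℚ_[p]} (hx : x ≠ 0) :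
    ‖x‖ < 1 ↔ 0 < x.valuation := by
  rw [← one_lt_inv₀ (norm_pos_iff.2 hx), ← norm_inv, padic_one_lt_norm_iff_valuation_neg,
    Padic.valuation_inv, neg_lt_zero]

lemma exists_int_eq_prime_mul_of_norm_lt_one {q : ℚ} {z : ℤ} {j : ℕ} (hq : q = z / p ^ j)
    (hlt : ‖(q : ℚ_[p])‖ < 1) : ∃ k : ℤ, q = p * k := by
  have hp : 0 < p := (Fact.out : p.Prime).pos
  have hz : ‖(z : ℚ_[p])‖ < (p : ℝ) ^ (-((j + 1 : ℕ) : ℤ) + 1) := by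
    have hexp : -((j + 1 : ℕ) : ℤ) + 1 = -(j : ℤ) := by push_cast; ring
    rw [hq] at hlt
    push_cast at hlt
    rwa [norm_div, Padic.norm_p_pow, div_lt_one (by positivity), ← hexp] at hlt
  obtain ⟨k, rfl⟩ := (Padic.norm_int_le_pow_iff_dvd z (j + 1)).1
    ((Padic.norm_le_pow_iff_norm_lt_pow_add_one _ _).2 hz)
  refine ⟨k, ?_⟩
  rw [hq]
  push_cast
  field_simp
  ring

lemma IsBrowkinDigit.eq_of_norm_sub_lt_one {b c : ℚ} (hb : IsBrowkinDigit p b)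
    (hc : IsBrowkinDigit p c) (hbc : ‖(b - c : ℚ_[p])‖ < 1) : b = c := by
  have hp : (0 : ℚ) < p := by exact_mod_cast (Fact.out : p.Prime).pos
  obtain ⟨⟨z, i, hz⟩, hb_lower, hb_upper⟩ := hb
  obtain ⟨⟨w, j, hw⟩, hc_lower, hc_upper⟩ := hc
  have hfrac : b - c = (z * p ^ j - w * p ^ i : ℤ) / p ^ (i + j) := by
    rw [hz, hw]
    push_cast
    field_simp
    ring
  obtain ⟨k, hk⟩ := exists_int_eq_prime_mul_of_norm_lt_one hfrac (by rwa [Rat.cast_sub])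
  have hk_lt : (k : ℚ) < 1 := lt_of_mul_lt_mul_left (by linarith) hp.le
  have hk_gt : (-1 : ℚ) < k := lt_of_mul_lt_mul_left (by linarith) hp.le
  have hk_zero : k = 0 := by
    norm_cast at hk_lt hk_gt
    lia
  rwa [hk_zero, Int.cast_zero, mul_zero, sub_eq_zero] at hk

lemma IsBCF.isQuadraticExpansion {x y : ℕ → ℚ_[p]} {a : ℕ → ℚ} (h : IsBCF p x a)
    (hconj : IsQuadraticConj (Rat.castHom ℚ_[p]).fieldRange (x 0) (y 0))
    (hy : ∀ n, y (n + 1) = (y n - (a n : ℚ_[p]))⁻¹) :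
    IsQuadraticExpansion (Rat.castHom ℚ_[p]).fieldRange x y fun n ↦ (a n : ℚ_[p]) where
  isQuadraticConj_zero := hconj
  partialQuotient_mem n := ⟨a n, rfl⟩
  norm_sub_lt_one n := (h n).2.1
  left_succ n := (h n).2.2
  right_succ := hy

end Padic

/-- Galois-type theorem: if the BCF of a quadratic irrational `α`
is eventually periodic, then it is purely periodic iff `α` is regular, i.e.
`v_p(α) < 0` and `v_p(α^c) > 0`. -/
theorem browkin_purely_periodic_iff_regular
    (p : ℕ) [Fact p.Prime] (hp : Odd p)
    (α : ℚ_[p]) (hirr : ∀ q : ℚ, α ≠ (q : ℚ_[p]))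
    (tr nm : ℚ) (hquad : α ^ 2 - (tr : ℚ_[p]) * α + (nm : ℚ_[p]) = 0)
    (αc : ℚ_[p]) (hαc : αc = (tr : ℚ_[p]) - α)
    (αs : ℕ → ℚ_[p]) (a : ℕ → ℚ) (hα0 : αs 0 = α) (hbcf : IsBCF p αs a)
    (αcs : ℕ → ℚ_[p]) (hαc0 : αcs 0 = αc)
    (hαcstep : ∀ n, αcs (n + 1) = (αcs n - (a n : ℚ_[p]))⁻¹)
    (hper : ∃ m N : ℕ, 1 ≤ N ∧ αs (m + N) = αs m) :
    (∃ N : ℕ, 1 ≤ N ∧ αs N = αs 0) ↔ (α.valuation < 0 ∧ 0 < αc.valuation) := by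
  subst hα0 hαc
  have hconj : IsQuadraticConj (Rat.castHom ℚ_[p]).fieldRange (αs 0) (tr - αs 0) :=
    .of_root (fun ⟨q, hq⟩ ↦ hirr q hq.symm) ⟨tr, rfl⟩ ⟨nm, rfl⟩ hquad
  rw [← padic_one_lt_norm_iff_valuation_neg, ← padic_norm_lt_one_iff_valuation_pos
    hconj.symm.ne_zero]
  rw [← hαc0] at hconj ⊢
  exact browkin_purely_periodic_iff_regular_general (hbcf.isQuadraticExpansion hconj hαcstep)
    (fun m n h ↦ congrArg _ ((hbcf m).1.eq_of_norm_sub_lt_one (hbcf n).1 h))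
    (hconj.ne two_ne_zero) hper
end

section
/- Let p be an odd prime and α ∈ ℚ_p a quadratic irrational with conjugate α^c whose BCF expansion is purely periodic of period N: α_N = α, with partial quotients a_0, …, a_{N−1} repeating. Then the period is palindromic, i.e., a_j = a_{N−1−j} for all 0 ≤ j ≤ N−1, if and only if the norm of α is −1, i.e., α·α^c = −1. -/
/-!
If `α` has a purely periodic expansion with partial quotients `a₀, …, a_{N-1}`, then its conjugate
`α^c` runs through a periodic orbit of the same maps `z ↦ 1 / (z - aₙ)`. These maps expand the
distance of two points of norm at least `1`, so the conjugate orbit must enter the open unit disc,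
where `|aₙ| > 1` traps it. Reading the conjugate orbit backwards, `-1 / α^c` is therefore expanded
by the reversed period `a_{N-1}, …, a₀` (the analogue of a theorem of Galois). The period is
palindromic iff `α` and `-1 / α^c` have the same expansion, that is, iff `α = -1 / α^c`.
-/

section Field

variable {K : Type*} [Field K] {N : ℕ} {x y a : ℕ → K}

/-- `x 0, …, x N` are the complete quotients of `N` steps of a continued fraction with partial
quotients `a 0, …, a (N - 1)`. The recursion `x (n + 1) = (x n - a n)⁻¹` is written
multiplicatively, which includes that `x n ≠ a n`. -/
def IsCompleteQuotientSeq (N : ℕ) (x a : ℕ → K) : Prop :=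
  ∀ n < N, (x n - a n) * x (n + 1) = 1

namespace IsCompleteQuotientSeq

lemma of_eq_inv (hne : ∀ n < N, x n ≠ a n) (h : ∀ n < N, x (n + 1) = (x n - a n)⁻¹) :
    IsCompleteQuotientSeq N x a := fun n hn ↦ by
  rw [h n hn, mul_inv_cancel₀ (sub_ne_zero.2 (hne n hn))]

lemma sub_eq_inv (hx : IsCompleteQuotientSeq N x a) {n : ℕ} (hn : n < N) :
    x n - a n = (x (n + 1))⁻¹ :=
  eq_inv_of_mul_eq_one_left (hx n hn)

lemma eq_inv (hx : IsCompleteQuotientSeq N x a) {n : ℕ} (hn : n < N) :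
    x (n + 1) = (x n - a n)⁻¹ :=
  eq_inv_of_mul_eq_one_right (hx n hn)

lemma ne_zero (hx : IsCompleteQuotientSeq N x a) (h0 : x 0 ≠ 0) : ∀ n ≤ N, x n ≠ 0
  | 0, _ => h0
  | n + 1, hn => right_ne_zero_of_mul_eq_one (hx n hn)

lemma reverse (hx : IsCompleteQuotientSeq N x a) (h0 : x 0 ≠ 0) :
    IsCompleteQuotientSeq N (fun n ↦ -(x (N - n))⁻¹) (fun n ↦ a (N - 1 - n)) := fun n hn ↦ by
  obtain ⟨m, rfl⟩ : ∃ m, N = m + n + 1 := ⟨N - 1 - n, by omega⟩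
  have hm : m < m + n + 1 := by omega
  simp only [show m + n + 1 - n = m + 1 by omega, show m + n + 1 - 1 - n = m by omega,
    show m + n + 1 - (n + 1) = m by omega, ← hx.sub_eq_inv hm]
  field_simp [hx.ne_zero h0 m hm.le]
  ring

lemma sub_eq_mul_prod (hx : IsCompleteQuotientSeq N x a) (hy : IsCompleteQuotientSeq N y a) :
    ∀ n ≤ N, x n - y n = (x 0 - y 0) * ∏ i ∈ Finset.range n, -(x (i + 1) * y (i + 1))
  | 0, _ => by simp
  | n + 1, hn => by
    rw [Finset.prod_range_succ, ← mul_assoc, ← hx.sub_eq_mul_prod hy n (Nat.le_of_lt hn)]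
    linear_combination y (n + 1) * hx n hn - x (n + 1) * hy n hn

end IsCompleteQuotientSeq

/-- `x` is a quadratic irrational over the subfield `F` and `y` is its conjugate, expressed through
the trace and the norm. In characteristic two, `y = x` is not excluded. -/
structure IsQuadraticConjugate (F : Subfield K) (x y : K) : Prop where
  notMem : x ∉ F
  add_mem : x + y ∈ F
  mul_mem : x * y ∈ F

namespace IsQuadraticConjugate

variable {F : Subfield K} {u v w b : K}

lemma symm (h : IsQuadraticConjugate F u v) : IsQuadraticConjugate F v u where
  notMem hv := h.notMem (by simpa using F.sub_mem h.add_mem hv)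
  add_mem := add_comm u v ▸ h.add_mem
  mul_mem := mul_comm u v ▸ h.mul_mem

lemma ne_of_mem (h : IsQuadraticConjugate F u v) (hb : b ∈ F) : u ≠ b :=
  fun hu ↦ h.notMem (hu ▸ hb)

lemma unique (hv : IsQuadraticConjugate F u v) (hw : IsQuadraticConjugate F u w) : v = w := by
  by_contra hvw
  have hsub : v - w ∈ F := by simpa using F.sub_mem hv.add_mem hw.add_mem
  have hmul : u * (v - w) ∈ F := mul_sub u v w ▸ F.sub_mem hv.mul_mem hw.mul_mem
  exact hv.notMem (by simpa [sub_ne_zero.2 hvw] using F.div_mem hmul hsub)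

lemma sub (h : IsQuadraticConjugate F u v) (hb : b ∈ F) :
    IsQuadraticConjugate F (u - b) (v - b) where
  notMem hu := h.notMem (by simpa using F.add_mem hu hb)
  add_mem := by
    rw [sub_add_sub_comm]
    exact F.sub_mem h.add_mem (F.add_mem hb hb)
  mul_mem := by
    rw [show (u - b) * (v - b) = u * v - b * (u + v) + b * b by ring]
    exact F.add_mem (F.sub_mem h.mul_mem (F.mul_mem hb h.add_mem)) (F.mul_mem hb hb)

lemma inv (h : IsQuadraticConjugate F u v) : IsQuadraticConjugate F u⁻¹ v⁻¹ where
  notMem hu := h.notMem (by simpa using F.inv_mem hu)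
  add_mem := by
    rw [inv_add_inv (h.ne_of_mem F.zero_mem) (h.symm.ne_of_mem F.zero_mem)]
    exact F.div_mem h.add_mem h.mul_mem
  mul_mem := by
    rw [← mul_inv]
    exact F.inv_mem h.mul_mem

lemma of_forall_eq_inv (h : IsQuadraticConjugate F (x 0) (y 0)) (ha : ∀ n < N, a n ∈ F)
    (hx : ∀ n < N, x (n + 1) = (x n - a n)⁻¹) (hy : ∀ n < N, y (n + 1) = (y n - a n)⁻¹) :
    ∀ n ≤ N, IsQuadraticConjugate F (x n) (y n)
  | 0, _ => h
  | n + 1, hn => by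
    rw [hx n hn, hy n hn]
    exact ((of_forall_eq_inv h ha hx hy n (Nat.le_of_lt hn)).sub (ha n hn)).inv

end IsQuadraticConjugate

end Field

section NormedField

variable {K : Type*} [NormedField K] {N : ℕ} {x y a b : ℕ → K}

namespace IsCompleteQuotientSeq

lemma norm_sub_lt_one (hx : IsCompleteQuotientSeq N x a) {n : ℕ} (hn : n < N)
    (hlt : 1 < ‖x (n + 1)‖) : ‖x n - a n‖ < 1 := by
  rw [hx.sub_eq_inv hn, norm_inv]
  exact inv_lt_one_of_one_lt₀ hlt

lemma one_lt_norm_succ (hx : IsCompleteQuotientSeq N x a) {n : ℕ} (hn : n < N)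
    (hlt : ‖x n - a n‖ < 1) : 1 < ‖x (n + 1)‖ := by
  rw [hx.eq_inv hn, norm_inv]
  exact (one_lt_inv₀ (norm_pos_iff.2 (left_ne_zero_of_mul_eq_one (hx n hn)))).2 hlt

/-- The product `∏ ‖x (n + 1)‖ ‖y (n + 1)‖ > 1` is the factor by which one period expands the
distance of the two orbits. -/
lemma eq_of_periodic (hx : IsCompleteQuotientSeq N x a) (hy : IsCompleteQuotientSeq N y a)
    (hN : 0 < N) (hx_per : x N = x 0) (hy_per : y N = y 0)
    (hx_norm : ∀ n < N, 1 < ‖x (n + 1)‖) (hy_norm : ∀ n < N, 1 ≤ ‖y (n + 1)‖) : x 0 = y 0 := by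
  by_contra hne
  have hprod : ∏ i ∈ Finset.range N, -(x (i + 1) * y (i + 1)) = 1 := by
    have := hx.sub_eq_mul_prod hy N le_rfl
    rwa [hx_per, hy_per, eq_comm, mul_eq_left₀ (sub_ne_zero.2 hne)] at this
  have hlt : ∏ _ ∈ Finset.range N, (1 : ℝ) < ∏ i ∈ Finset.range N, ‖-(x (i + 1) * y (i + 1))‖ := by
    refine Finset.prod_lt_prod_of_nonempty (fun _ _ ↦ one_pos) (fun i hi ↦ ?_)
      (Finset.nonempty_range_iff.2 hN.ne')
    rw [norm_neg, norm_mul]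
    exact one_lt_mul_of_lt_of_le (hx_norm i (Finset.mem_range.1 hi))
      (hy_norm i (Finset.mem_range.1 hi))
  rw [← norm_prod, hprod, norm_one, Finset.prod_const_one] at hlt
  exact hlt.false

variable [IsUltrametricDist K]

lemma norm_succ_lt_one (hy : IsCompleteQuotientSeq N y a) {n : ℕ} (hn : n < N)
    (ha : 1 < ‖a n‖) (hlt : ‖y n‖ < 1) : ‖y (n + 1)‖ < 1 := by
  rw [hy.eq_inv hn, norm_inv]
  refine inv_lt_one_of_one_lt₀ ?_
  have hmax := dist_triangle_max (a n) (y n) 0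
  rw [dist_zero_right, dist_zero_right, dist_comm, dist_eq_norm] at hmax
  exact (lt_max_iff.1 (ha.trans_le hmax)).resolve_right hlt.not_gt

lemma norm_lt_one_of_le (hy : IsCompleteQuotientSeq N y a) (ha : ∀ n < N, 1 < ‖a n‖) {m n : ℕ}
    (hmn : m ≤ n) (hn : n ≤ N) (hlt : ‖y m‖ < 1) : ‖y n‖ < 1 := by
  induction n, hmn using Nat.le_induction with
  | base => exact hlt
  | succ n _ ih => exact hy.norm_succ_lt_one hn (ha n hn) (ih (Nat.le_of_lt hn))

lemma one_lt_norm_digit (hx : IsCompleteQuotientSeq N x a) (hx_per : x N = x 0)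
    (hx_norm : ∀ n < N, 1 < ‖x (n + 1)‖) : ∀ n < N, 1 < ‖a n‖ := by
  intro n hn
  have hxn : 1 < ‖x n‖ := by
    cases n with
    | zero => simpa [← hx_per, Nat.sub_add_cancel hn] using hx_norm (N - 1) (by omega)
    | succ n => exact hx_norm n (Nat.lt_of_succ_lt hn)
  have hmax := IsUltrametricDist.norm_add_le_max (x n - a n) (a n)
  rw [sub_add_cancel] at hmax
  exact (lt_max_iff.1 (hxn.trans_le hmax)).resolve_left
    (hx.norm_sub_lt_one hn (hx_norm n hn)).not_gt

lemma norm_lt_one_of_periodic_of_ne (hx : IsCompleteQuotientSeq N x a)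
    (hy : IsCompleteQuotientSeq N y a) (hN : 0 < N) (hx_per : x N = x 0) (hy_per : y N = y 0)
    (hx_norm : ∀ n < N, 1 < ‖x (n + 1)‖) (hne : x 0 ≠ y 0) : ∀ n ≤ N, ‖y n‖ < 1 := by
  have ha := hx.one_lt_norm_digit hx_per hx_norm
  have hyN : ‖y N‖ < 1 := by
    by_contra! hge
    refine hne (hx.eq_of_periodic hy hN hx_per hy_per hx_norm fun n hn ↦ ?_)
    by_contra! hlt
    exact hge.not_gt (hy.norm_lt_one_of_le ha hn le_rfl hlt)
  exact fun n hn ↦ hy.norm_lt_one_of_le ha n.zero_le hn (hy_per ▸ hyN)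

lemma digits_eq {D : Set K} (hD : D.Pairwise fun b c ↦ 1 ≤ ‖b - c‖)
    (hx : IsCompleteQuotientSeq N x a) (hy : IsCompleteQuotientSeq N y b)
    (ha : ∀ n < N, a n ∈ D) (hb : ∀ n < N, b n ∈ D)
    (hx_norm : ∀ n < N, 1 < ‖x (n + 1)‖) (hy_norm : ∀ n < N, 1 < ‖y (n + 1)‖) (h0 : x 0 = y 0) :
    ∀ n < N, a n = b n := by
  have digit_eq {n : ℕ} (hn : n < N) (hxy : x n = y n) : a n = b n := by
    refine hD.eq (ha n hn) (hb n hn) (not_le.2 ?_)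
    have hxa : dist (a n) (x n) < 1 := by
      rw [dist_comm, dist_eq_norm]
      exact hx.norm_sub_lt_one hn (hx_norm n hn)
    have hxb : dist (x n) (b n) < 1 := by
      rw [hxy, dist_eq_norm]
      exact hy.norm_sub_lt_one hn (hy_norm n hn)
    rw [← dist_eq_norm]
    exact (dist_triangle_max _ _ _).trans_lt (max_lt hxa hxb)
  have quotient_eq (n : ℕ) (hn : n ≤ N) : x n = y n := by
    induction n with
    | zero => exact h0
    | succ n ih =>
      have hxy := ih (Nat.le_of_lt hn)
      rw [hx.eq_inv hn, hy.eq_inv hn, hxy, digit_eq hn hxy]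
  exact fun n hn ↦ digit_eq hn (quotient_eq n hn.le)

theorem palindromic_iff_mul_eq_neg_one {D : Set K} (hD : D.Pairwise fun b c ↦ 1 ≤ ‖b - c‖)
    (hx : IsCompleteQuotientSeq N x a) (hy : IsCompleteQuotientSeq N y a) (ha : ∀ n < N, a n ∈ D)
    (hN : 0 < N) (hx_per : x N = x 0) (hy_per : y N = y 0)
    (hx_norm : ∀ n < N, 1 < ‖x (n + 1)‖) (hne : x 0 ≠ y 0) :
    (∀ n < N, a n = a (N - 1 - n)) ↔ x 0 * y 0 = -1 := by
  have hy_lt := hx.norm_lt_one_of_periodic_of_ne hy hN hx_per hy_per hx_norm hne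
  have hy0 : y 0 ≠ 0 := by
    rw [← hy_per, ← Nat.sub_add_cancel hN]
    exact right_ne_zero_of_mul_eq_one (hy (N - 1) (by omega))
  have hz := hy.reverse hy0
  have hz_norm : ∀ n < N, 1 < ‖-(y (N - (n + 1)))⁻¹‖ := fun n _ ↦ by
    rw [norm_neg, norm_inv]
    exact (one_lt_inv₀ (norm_pos_iff.2 (hy.ne_zero hy0 _ (by omega)))).2 (hy_lt _ (by omega))
  have hxz : x 0 = -(y (N - 0))⁻¹ ↔ x 0 * y 0 = -1 := by
    rw [Nat.sub_zero, hy_per, inv_eq_one_div, ← neg_div, eq_div_iff hy0]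
  rw [← hxz]
  refine ⟨fun hpal ↦ ?_, fun h ↦ hx.digits_eq hD hz ha (fun n _ ↦ ha _ (by omega)) hx_norm
    hz_norm h⟩
  have hz' : IsCompleteQuotientSeq N (fun n ↦ -(y (N - n))⁻¹) a := fun n hn ↦ by
    rw [hpal n hn]
    exact hz n hn
  exact hx.eq_of_periodic hz' hN hx_per (by simp [hy_per]) hx_norm fun n hn ↦ (hz_norm n hn).le

end IsCompleteQuotientSeq

/-- Here `D` plays the role of Browkin's digit set `𝒴`, and `F` that of `ℚ`. -/
theorem browkin_palindromic_iff_norm_neg_one_general [IsUltrametricDist K]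
    {F : Subfield K} {D : Set K} (hDF : D ⊆ F) (hD : D.Pairwise fun b c ↦ 1 ≤ ‖b - c‖)
    {α αc : K} (hα : IsQuadraticConjugate F α αc) (hne : α ≠ αc)
    (hx0 : x 0 = α) (hy0 : y 0 = αc) (ha : ∀ n < N, a n ∈ D)
    (hlt : ∀ n < N, ‖x n - a n‖ < 1) (hx : ∀ n < N, x (n + 1) = (x n - a n)⁻¹)
    (hy : ∀ n < N, y (n + 1) = (y n - a n)⁻¹) (hN : 0 < N) (hper : x N = α) :
    (∀ n < N, a n = a (N - 1 - n)) ↔ α * αc = -1 := by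
  subst hx0 hy0
  have haF : ∀ n < N, a n ∈ F := fun n hn ↦ hDF (ha n hn)
  have hconj := hα.of_forall_eq_inv haF hx hy
  have hx' := IsCompleteQuotientSeq.of_eq_inv
    (fun n hn ↦ (hconj n hn.le).ne_of_mem (haF n hn)) hx
  have hy' := IsCompleteQuotientSeq.of_eq_inv
    (fun n hn ↦ (hconj n hn.le).symm.ne_of_mem (haF n hn)) hy
  have hy_per : y N = y 0 := (hper ▸ hconj N le_rfl).unique hα
  exact hx'.palindromic_iff_mul_eq_neg_one hD hy' ha hN hper hy_per
    (fun n hn ↦ hx'.one_lt_norm_succ hn (hlt n hn)) hne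

end NormedField

section Padic

variable {p : ℕ} [Fact p.Prime]

lemma exists_intCast_eq_of_eq_div_pow_of_norm_le_one {q : ℚ} {z : ℤ} {k : ℕ}
    (hq : q = z / p ^ k) (h : ‖(q : ℚ_[p])‖ ≤ 1) : ∃ m : ℤ, q = m := by
  subst hq
  push_cast at h
  have hp : (0 : ℝ) < p := mod_cast (Fact.out : p.Prime).pos
  have hp' : (p : ℚ) ≠ 0 := mod_cast (Fact.out : p.Prime).ne_zero
  rw [norm_div, Padic.norm_p_pow, div_le_one (by positivity), Padic.norm_int_le_pow_iff_dvd] at h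
  obtain ⟨m, rfl⟩ := h
  exact ⟨m, by push_cast; field_simp⟩

lemma IsBrowkinDigit.one_le_norm_sub {y z : ℚ} (hy : IsBrowkinDigit p y)
    (hz : IsBrowkinDigit p z) (hne : y ≠ z) : 1 ≤ ‖(y - z : ℚ_[p])‖ := by
  obtain ⟨⟨u, i, hu⟩, hy_gt, hy_lt⟩ := hy
  obtain ⟨⟨v, j, hv⟩, hz_gt, hz_lt⟩ := hz
  have hp : (p : ℚ) ≠ 0 := mod_cast (Fact.out : p.Prime).ne_zero
  by_contra! hlt
  obtain ⟨m, hm⟩ : ∃ m : ℤ, y - z = m := by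
    have hsub : y - z = ((u * p ^ j - v * p ^ i : ℤ) : ℚ) / p ^ (i + j) := by
      rw [hu, hv]
      push_cast
      rw [div_sub_div _ _ (pow_ne_zero i hp) (pow_ne_zero j hp), pow_add, mul_comm (v : ℚ)]
    rw [← Rat.cast_sub] at hlt
    exact exists_intCast_eq_of_eq_div_pow_of_norm_le_one hsub hlt.le
  have hdvd : (p : ℤ) ∣ m := by
    rwa [← Rat.cast_sub, hm, Rat.cast_intCast, Padic.norm_intCast_lt_one_iff] at hlt
  have habs : |m| < p := by
    have : |(m : ℚ)| < p := by
      rw [← hm, abs_lt]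
      constructor <;> linarith
    exact_mod_cast this
  refine hne (sub_eq_zero.1 ?_)
  rw [hm, Int.eq_zero_of_abs_lt_dvd hdvd habs, Int.cast_zero]

lemma pairwise_one_le_norm_sub_browkinDigits :
    (((↑) : ℚ → ℚ_[p]) '' {y | IsBrowkinDigit p y}).Pairwise fun b c ↦ 1 ≤ ‖b - c‖ := by
  rintro _ ⟨y, hy, rfl⟩ _ ⟨z, hz, rfl⟩ hne
  exact hy.one_le_norm_sub hz fun h ↦ hne (congrArg _ h)

lemma isQuadraticConjugate_ratCast {α : ℚ_[p]} (hirr : ∀ q : ℚ, α ≠ q) {t n : ℚ}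
    (h : α ^ 2 - t * α + n = 0) :
    IsQuadraticConjugate (Rat.castHom ℚ_[p]).fieldRange α (t - α) where
  notMem := fun ⟨q, hq⟩ ↦ hirr q hq.symm
  add_mem := ⟨t, by simp⟩
  mul_mem := ⟨n, by rw [Rat.coe_castHom]; linear_combination h⟩

end Padic

/-- if the BCF of `α` is purely periodic of period `N` (`α_N = α`),
then the period is palindromic (`a_j = a_{N−1−j}` for `0 ≤ j < N`) iff the norm
of `α` is `−1`, i.e. `α·α^c = −1`. -/
theorem browkin_palindromic_iff_norm_neg_one
    (p : ℕ) [Fact p.Prime] (hp : Odd p)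
    (α : ℚ_[p]) (hirr : ∀ q : ℚ, α ≠ (q : ℚ_[p]))
    (tr nm : ℚ) (hquad : α ^ 2 - (tr : ℚ_[p]) * α + (nm : ℚ_[p]) = 0)
    (αc : ℚ_[p]) (hαc : αc = (tr : ℚ_[p]) - α)
    (αs : ℕ → ℚ_[p]) (a : ℕ → ℚ) (hα0 : αs 0 = α) (hbcf : IsBCF p αs a)
    (αcs : ℕ → ℚ_[p]) (hαc0 : αcs 0 = αc)
    (hαcstep : ∀ n, αcs (n + 1) = (αcs n - (a n : ℚ_[p]))⁻¹)
    (N : ℕ) (hN : 1 ≤ N) (hper : αs N = α) :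
    (∀ j < N, a j = a (N - 1 - j)) ↔ α * αc = -1 := by
  subst hαc
  have hne : α ≠ tr - α := fun h ↦ hirr (tr / 2) (by push_cast; linear_combination h / 2)
  have hDF : ((↑) : ℚ → ℚ_[p]) '' {y | IsBrowkinDigit p y} ⊆ (Rat.castHom ℚ_[p]).fieldRange := by
    rintro _ ⟨y, -, rfl⟩
    exact ⟨y, rfl⟩
  have h := browkin_palindromic_iff_norm_neg_one_general hDF
    pairwise_one_le_norm_sub_browkinDigits (isQuadraticConjugate_ratCast hirr hquad) hne hα0 hαc0
    (fun n _ ↦ Set.mem_image_of_mem _ (hbcf n).1) (fun n _ ↦ (hbcf n).2.1)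
    (fun n _ ↦ (hbcf n).2.2) (fun n _ ↦ hαcstep n) hN hper
  simpa only [Rat.cast_inj] using h
end

section
/- Let p be an odd prime and α ∈ ℚ_p a quadratic irrational whose BCF complete quotients admit a representation α_n = (b_n + δ)/(p^{k_n} c_n) with b_n, c_n, k_n ∈ ℤ, c_n ≠ 0, p ∤ c_n, where δ ∈ ℚ_p and δ² = Δ is a non-square integer with Δ > 0. Set t = ⌊√Δ⌋ and K = (2t+1)Δ + 1 − t(t+1)(2t+1)/3. If there exists n_0 > 0 such that b_n² < Δ for every n with n_0 ≤ n ≤ n_0 + K (i.e., the real embeddings of these α_n have negative norm), then the BCF expansion of α is periodic with period length at most K: there exist m ≥ 0 and 1 ≤ N ≤ K with α_{m+N} = α_m. -/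
/-!
Write `α_n = (b_n + δ) / D_n`, where `D_n = p^{k_n} c_n`. Comparing coefficients of `1` and `δ` in
`α_{n+1} (α_n - a_n) = 1` gives `D_n D_{n+1} = Δ - b_{n+1}²`. Since `|α_{n+1}|_p > 1`, the
exponents `k_{n+1}` are positive, so the `D_{n+1}` are integers. While the norms are negative, the
`D_n` keep a constant sign and `1 ≤ |D_{n+1}| ≤ Δ - b_{n+1}²`. Exactly `K - 1` pairs
`(b_{n+1}, |D_{n+1}|)` satisfy this, so two of any `K` consecutive complete quotients coincide.
-/

open Finset

theorem exists_lt_map_eq_of_forall_le_card {β : Type*} {s : Finset β} {f : ℕ → β}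
    (hf : ∀ i ≤ #s, f i ∈ s) : ∃ i j, i < j ∧ j ≤ #s ∧ f i = f j := by
  have hmaps : Set.MapsTo f (range (#s + 1)) s := fun i hi ↦
    hf i (Nat.lt_succ_iff.1 (mem_range.1 hi))
  obtain ⟨i, hi, j, hj, hne, heq⟩ :=
    exists_ne_map_eq_of_card_lt_of_maps_to (by simp) hmaps
  rw [mem_range, Nat.lt_succ_iff] at hi hj
  rcases hne.lt_or_gt with hlt | hlt
  · exact ⟨i, j, hlt, hj, heq⟩
  · exact ⟨j, i, hlt, hi, heq.symm⟩

section Sign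

variable {R : Type*} [Ring R] [LinearOrder R] [IsStrictOrderedRing R]

theorem sign_eq_sign_of_mul_pos {x y : R} (h : 0 < x * y) :
    SignType.sign x = SignType.sign y := by
  rcases pos_and_pos_or_neg_and_neg_of_mul_pos h with ⟨hx, hy⟩ | ⟨hx, hy⟩
  · rw [sign_pos hx, sign_pos hy]
  · rw [sign_neg hx, sign_neg hy]

theorem sign_eq_sign_zero_of_mul_succ_pos {u : ℕ → R} {M : ℕ}
    (hu : ∀ n < M, 0 < u n * u (n + 1)) :
    ∀ n ≤ M, SignType.sign (u n) = SignType.sign (u 0)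
  | 0, _ => rfl
  | n + 1, hn => (sign_eq_sign_of_mul_pos (hu n hn)).symm.trans
      (sign_eq_sign_zero_of_mul_succ_pos hu n (Nat.le_of_succ_le hn))

theorem eq_of_sign_eq_of_abs_eq {x y : R} (hsign : SignType.sign x = SignType.sign y)
    (habs : |x| = |y|) : x = y := by
  rw [← sign_mul_abs x, hsign, habs, sign_mul_abs]

end Sign

section IntSqrt

theorem abs_le_intSqrt_of_sq_le {x Δ : ℤ} (h : x ^ 2 ≤ Δ) : |x| ≤ Int.sqrt Δ := by
  have hnat : x.natAbs ≤ Nat.sqrt Δ.toNat := by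
    rw [Nat.le_sqrt']
    zify
    rw [sq_abs]
    exact h.trans Δ.self_le_toNat
  rw [Int.abs_eq_natAbs, Int.sqrt]
  exact_mod_cast hnat

theorem intSqrt_sq_le {Δ : ℤ} (hΔ : 0 ≤ Δ) : Int.sqrt Δ ^ 2 ≤ Δ := by
  lift Δ to ℕ using hΔ
  rw [Int.sqrt_natCast]
  exact_mod_cast Nat.sqrt_le' Δ

theorem three_mul_sum_Icc_neg_sq (t : ℕ) :
    3 * ∑ x ∈ Icc (-t : ℤ) t, x ^ 2 = (t : ℤ) * (t + 1) * (2 * t + 1) := by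
  have hrange : 6 * ∑ x ∈ range (t + 1), (x : ℤ) ^ 2 = t * (t + 1) * (2 * t + 1) := by
    induction t with
    | zero => simp
    | succ t ih =>
      rw [sum_range_succ, mul_add, ih]
      push_cast
      ring
  rw [sum_Icc_of_even_eq_range (f := fun x : ℤ ↦ x ^ 2) even_two.neg_pow, ← hrange]
  simp only [nsmul_eq_mul]
  push_cast
  ring

end IntSqrt

/-- The pairs `(b, d)` of integers with `1 ≤ d ≤ Δ - b²`. They contain every value of
`(b_n, |D_n|)` for a complete quotient `(b_n + δ) / D_n` of negative norm `(b_n² - Δ) / D_n²`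
whose predecessor has integral denominator. The condition forces `|b| ≤ ⌊√Δ⌋`, which is built into
the definition to make the set finite. -/
noncomputable def negativeNormStates (Δ : ℤ) : Finset ((_ : ℤ) × ℤ) :=
  (Icc (-Int.sqrt Δ) (Int.sqrt Δ)).sigma fun b ↦ Icc 1 (Δ - b ^ 2)

namespace negativeNormStates

theorem mem_iff {Δ b d : ℤ} :
    (⟨b, d⟩ : (_ : ℤ) × ℤ) ∈ negativeNormStates Δ ↔ 1 ≤ d ∧ d ≤ Δ - b ^ 2 := by
  simp only [negativeNormStates, mem_sigma, mem_Icc, and_iff_right_iff_imp, ← abs_le]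
  rintro ⟨hd, hdΔ⟩
  exact abs_le_intSqrt_of_sq_le (by linarith)

theorem mem_of_mul_eq {Δ b d d' : ℤ} (hmul : d * d' = Δ - b ^ 2) (hb : b ^ 2 < Δ) :
    (⟨b, |d'|⟩ : (_ : ℤ) × ℤ) ∈ negativeNormStates Δ := by
  have hpos : 0 < Δ - b ^ 2 := sub_pos.2 hb
  have hd' : d' ≠ 0 := right_ne_zero_of_mul (hmul.trans_ne hpos.ne')
  exact mem_iff.2 ⟨Int.one_le_abs hd',
    Int.le_of_dvd hpos ((abs_dvd _ _).2 (Dvd.intro_left _ hmul))⟩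

theorem card_eq_sum {Δ : ℤ} (hΔ : 0 ≤ Δ) :
    (#(negativeNormStates Δ) : ℤ) =
      ∑ b ∈ Icc (-Int.sqrt Δ) (Int.sqrt Δ), (Δ - b ^ 2) := by
  rw [negativeNormStates, card_sigma, Nat.cast_sum]
  refine sum_congr rfl fun b hb ↦ ?_
  have hb_sq : b ^ 2 ≤ Int.sqrt Δ ^ 2 := sq_le_sq' (mem_Icc.1 hb).1 (mem_Icc.1 hb).2
  have hnonneg : 0 ≤ Δ - b ^ 2 := sub_nonneg.2 (hb_sq.trans (intSqrt_sq_le hΔ))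
  rw [Int.card_Icc, add_sub_cancel_right, Int.toNat_of_nonneg hnonneg]

theorem card_eq {Δ t : ℤ} (hΔ : 0 ≤ Δ) (ht : t = Int.sqrt Δ) :
    (#(negativeNormStates Δ) : ℤ) = (2 * t + 1) * Δ - t * (t + 1) * (2 * t + 1) / 3 := by
  rw [card_eq_sum hΔ, ← ht]
  lift t to ℕ using ht ▸ Int.sqrt_nonneg Δ
  rw [sum_sub_distrib, ← three_mul_sum_Icc_neg_sq, Int.mul_ediv_cancel_left _ three_ne_zero,
    sum_const, Int.card_Icc, nsmul_eq_mul, Int.toNat_of_nonneg (by linarith)]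
  ring

end negativeNormStates

section QuadraticIrrational

variable {L : Type*} [Field L] {δ : L} {Δ : ℤ}

theorem add_div_ne_zero_of_ne_ratCast (hδ : ∀ q : ℚ, δ ≠ q) (b : ℚ) {D : L} (hD : D ≠ 0) :
    (b + δ) / D ≠ 0 := by
  refine div_ne_zero (fun h ↦ hδ (-b) ?_) hD
  push_cast
  exact eq_neg_of_add_eq_zero_right h

variable [CharZero L]

theorem ne_ratCast_of_sq_eq_intCast (hδ : δ ^ 2 = Δ) (hΔ : ¬IsSquare Δ) (q : ℚ) :
    δ ≠ q := by
  rintro rfl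
  have hq : q * q = Δ := by
    rw [← sq]
    exact_mod_cast hδ
  exact hΔ (Rat.isSquare_intCast_iff.1 ⟨q, hq.symm⟩)

theorem eq_zero_and_eq_zero_of_add_mul_eq_zero (hδ : ∀ q : ℚ, δ ≠ q) {x y : ℚ}
    (h : (x : L) + y * δ = 0) : x = 0 ∧ y = 0 := by
  have hy : y = 0 := by
    by_contra hy
    have hyL : (y : L) ≠ 0 := Rat.cast_ne_zero.2 hy
    refine hδ (-x / y) ?_
    push_cast
    rw [eq_div_iff hyL]
    linear_combination h
  subst hy
  exact ⟨by simpa using h, rfl⟩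

theorem denom_mul_denom_eq_of_eq_inv_sub (hδ : δ ^ 2 = Δ) (hΔ : ¬IsSquare Δ)
    {a b b' D D' : ℚ} (hD : D ≠ 0) (hD' : D' ≠ 0)
    (h : (b' + δ) / D' = ((b + δ) / D - a)⁻¹) : D * D' = Δ - b' ^ 2 := by
  have hirr := ne_ratCast_of_sq_eq_intCast hδ hΔ
  have hDL : (D : L) ≠ 0 := Rat.cast_ne_zero.2 hD
  have hDL' : (D' : L) ≠ 0 := Rat.cast_ne_zero.2 hD'
  have hne : (b + δ) / D - a ≠ 0 :=
    inv_eq_zero.not.1 (h ▸ add_div_ne_zero_of_ne_ratCast hirr b' hDL')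
  have hmul : (b' + δ) * (b + δ - a * D) = D * D' := by
    rw [← mul_eq_one_iff_eq_inv₀ hne] at h
    field_simp at h
    linear_combination h
  have hcoeff := eq_zero_and_eq_zero_of_add_mul_eq_zero hirr
    (x := Δ + b' * (b - a * D) - D * D') (y := b + b' - a * D) (by
      push_cast
      linear_combination hmul - hδ)
  linear_combination b' * hcoeff.2 - hcoeff.1

theorem exists_period_le_card_negativeNormStates (hδ : δ ^ 2 = Δ) (hΔ : ¬IsSquare Δ)
    {α : ℕ → L} {a : ℕ → ℚ} {b D : ℕ → ℤ} (hD : ∀ n, D n ≠ 0)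
    (hα : ∀ n, α n = (b n + δ) / D n) (hsucc : ∀ n, α (n + 1) = (α n - a n)⁻¹)
    (hneg : ∀ n ≤ #(negativeNormStates Δ), b (n + 1) ^ 2 < Δ) :
    ∃ m N : ℕ, 1 ≤ N ∧ N ≤ #(negativeNormStates Δ) ∧ α (m + N) = α m := by
  have hmul (n : ℕ) : D n * D (n + 1) = Δ - b (n + 1) ^ 2 := by
    have hDQ (n : ℕ) : (D n : ℚ) ≠ 0 := Int.cast_ne_zero.2 (hD n)
    have h := hsucc n
    rw [hα, hα] at h
    have hQ := denom_mul_denom_eq_of_eq_inv_sub hδ hΔ (a := a n) (b := b n) (b' := b (n + 1))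
      (hDQ n) (hDQ (n + 1)) (by simpa only [Rat.cast_intCast] using h)
    exact_mod_cast hQ
  have hsign := sign_eq_sign_zero_of_mul_succ_pos (u := D) (M := #(negativeNormStates Δ) + 1)
    fun n hn ↦ by
      rw [hmul]
      exact sub_pos.2 (hneg n (Nat.lt_succ_iff.1 hn))
  obtain ⟨i, j, hij, hj, hstate⟩ := exists_lt_map_eq_of_forall_le_card
    (f := fun n ↦ (⟨b (n + 1), |D (n + 1)|⟩ : (_ : ℤ) × ℤ))
    fun n hn ↦ negativeNormStates.mem_of_mul_eq (hmul n) (hneg n hn)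
  obtain ⟨hb, habs⟩ : b (i + 1) = b (j + 1) ∧ |D (i + 1)| = |D (j + 1)| := by
    simpa only [Sigma.mk.injEq, heq_eq_eq] using hstate
  have hDij : D (i + 1) = D (j + 1) :=
    eq_of_sign_eq_of_abs_eq ((hsign _ (by lia)).trans (hsign _ (by lia)).symm) habs
  refine ⟨i + 1, j - i, by lia, by lia, ?_⟩
  rw [show i + 1 + (j - i) = j + 1 by lia, hα, hα, hb, hDij]

end QuadraticIrrational

section Padic

variable {p : ℕ} [Fact p.Prime]

theorem padic_norm_le_one_of_sq_eq_intCast {δ : ℚ_[p]} {Δ : ℤ} (hδ : δ ^ 2 = Δ) :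
    ‖δ‖ ≤ 1 := by
  rw [← pow_le_one_iff_of_nonneg (norm_nonneg δ) two_ne_zero, ← norm_pow, hδ]
  exact Padic.norm_int_le_one Δ

theorem padic_norm_intCast_eq_one_of_not_dvd {c : ℤ} (hc : ¬(p : ℤ) ∣ c) :
    ‖(c : ℚ_[p])‖ = 1 :=
  (Padic.norm_int_le_one c).eq_of_not_lt (mt Padic.norm_intCast_lt_one_iff.1 hc)

theorem exponent_pos_of_one_lt_norm_div {x u : ℚ_[p]} {k : ℤ} (hx : ‖x‖ ≤ 1) (hu : ‖u‖ = 1)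
    (h : 1 < ‖x / ((p : ℚ_[p]) ^ k * u)‖) : 0 < k := by
  have hp : (1 : ℝ) < p := by exact_mod_cast (Fact.out : p.Prime).one_lt
  rw [norm_div, norm_mul, hu, mul_one, Padic.norm_p_zpow, zpow_neg, div_inv_eq_mul] at h
  rw [← one_lt_zpow_iff_right₀ hp]
  exact h.trans_le (mul_le_of_le_one_left (by positivity) hx)

theorem exists_intCast_eq_zpow_mul {k : ℤ} (hk : 0 ≤ k) (c : ℤ) :
    ∃ D : ℤ, (D : ℚ_[p]) = (p : ℚ_[p]) ^ k * c := by
  lift k to ℕ using hk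
  exact ⟨p ^ k * c, by push_cast; rw [zpow_natCast]⟩

theorem exponent_pos_of_one_lt_norm_add_div {δ : ℚ_[p]} {Δ : ℤ} (hδ : δ ^ 2 = Δ)
    {b c k : ℤ} (hc : ¬(p : ℤ) ∣ c) (h : 1 < ‖(b + δ) / ((p : ℚ_[p]) ^ k * c)‖) : 0 < k := by
  have hnum : ‖(b : ℚ_[p]) + δ‖ ≤ 1 := (Padic.nonarchimedean _ _).trans
    (max_le (Padic.norm_int_le_one b) (padic_norm_le_one_of_sq_eq_intCast hδ))
  exact exponent_pos_of_one_lt_norm_div hnum (padic_norm_intCast_eq_one_of_not_dvd hc) h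

theorem browkin_periodic_of_consecutive_negative_norms_general
    {α : ℕ → ℚ_[p]} {a : ℕ → ℚ} (hdigit : ∀ n, ‖α n - a n‖ < 1)
    (hsucc : ∀ n, α (n + 1) = (α n - a n)⁻¹)
    {δ : ℚ_[p]} {Δ : ℤ} (hδ : δ ^ 2 = Δ) (hΔ : ¬IsSquare Δ) (hΔpos : 0 < Δ)
    {b c k : ℕ → ℤ} (hc : ∀ n, ¬(p : ℤ) ∣ c n)
    (hrep : ∀ n, α n = (b n + δ) / ((p : ℚ_[p]) ^ k n * c n))
    {t K : ℤ} (ht : t = Int.sqrt Δ)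
    (hK : K = (2 * t + 1) * Δ + 1 - t * (t + 1) * (2 * t + 1) / 3)
    {n₀ : ℕ} (hn₀ : 0 < n₀) (hneg : ∀ n : ℕ, n₀ < n → (n : ℤ) ≤ n₀ + K → b n ^ 2 < Δ) :
    ∃ m N : ℕ, 1 ≤ N ∧ (N : ℤ) < K ∧ α (m + N) = α m := by
  have hcard := negativeNormStates.card_eq hΔpos.le ht
  have hden (n : ℕ) : (p : ℚ_[p]) ^ k n * c n ≠ 0 :=
    mul_ne_zero (zpow_ne_zero _ (Nat.cast_ne_zero.2 (Fact.out : p.Prime).ne_zero))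
      (Int.cast_ne_zero.2 fun h ↦ hc n (h ▸ dvd_zero _))
  have hα_ne (n : ℕ) : α n ≠ 0 := by
    rw [hrep, ← Rat.cast_intCast (b n)]
    exact add_div_ne_zero_of_ne_ratCast (ne_ratCast_of_sq_eq_intCast hδ hΔ) _ (hden n)
  have hone_lt (n : ℕ) : 1 < ‖α (n + 1)‖ := by
    have hne : α n - a n ≠ 0 := inv_eq_zero.not.1 (hsucc n ▸ hα_ne (n + 1))
    rw [hsucc, norm_inv]
    exact (one_lt_inv₀ (norm_pos_iff.2 hne)).2 (hdigit n)
  have hk (n : ℕ) : 0 ≤ k (n₀ + n) := by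
    have hlt := hone_lt (n₀ + n - 1)
    rw [show n₀ + n - 1 + 1 = n₀ + n by lia, hrep] at hlt
    exact (exponent_pos_of_one_lt_norm_add_div hδ (hc (n₀ + n)) hlt).le
  choose D hD using fun n ↦ exists_intCast_eq_zpow_mul (p := p) (hk n) (c (n₀ + n))
  obtain ⟨m, N, hN, hN_le, hperiod⟩ := exists_period_le_card_negativeNormStates hδ hΔ
    (α := fun n ↦ α (n₀ + n)) (a := fun n ↦ a (n₀ + n)) (b := fun n ↦ b (n₀ + n)) (D := D)
    (fun n ↦ Int.cast_ne_zero.1 (hD n ▸ hden (n₀ + n))) (fun n ↦ by rw [hD, hrep])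
    (fun n ↦ hsucc (n₀ + n)) (fun n hn ↦ hneg _ (by lia) (by push_cast; lia))
  exact ⟨n₀ + m, N, hN, by lia, by rw [add_assoc]; exact hperiod⟩

end Padic

/-- with `t = ⌊√Δ⌋` and `K = (2t+1)Δ + 1 − t(t+1)(2t+1)/3`, if the
real embeddings of the complete quotients `α_n` have negative norm
(`b_n² < Δ`) for every `n` with `n₀ ≤ n ≤ n₀ + K`, then the BCF expansion of
`α` is periodic with period length at most `K`. -/
theorem browkin_periodic_of_consecutive_negative_norms
    (p : ℕ) [Fact p.Prime] (hp : Odd p)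
    (α : ℚ_[p]) (hirr : ∀ q : ℚ, α ≠ (q : ℚ_[p]))
    (αs : ℕ → ℚ_[p]) (a : ℕ → ℚ) (hα0 : αs 0 = α) (hbcf : IsBCF p αs a)
    (δ : ℚ_[p]) (Δ : ℤ) (hδ : δ ^ 2 = (Δ : ℚ_[p])) (hΔ : ¬IsSquare Δ)
    (b c : ℕ → ℤ) (kk : ℕ → ℤ)
    (hrep : ∀ n, c n ≠ 0 ∧ ¬((p : ℤ) ∣ c n) ∧
      αs n = ((b n : ℚ_[p]) + δ) / ((p : ℚ_[p]) ^ (kk n) * (c n : ℚ_[p])))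
    (hΔpos : 0 < Δ) (t K : ℤ) (ht : t = Int.sqrt Δ)
    (hK : K = (2 * t + 1) * Δ + 1 - t * (t + 1) * (2 * t + 1) / 3)
    (n0 : ℕ) (hn0 : 0 < n0)
    (hneg : ∀ n : ℕ, n0 ≤ n → (n : ℤ) ≤ (n0 : ℤ) + K → (b n) ^ 2 < Δ) :
    ∃ m N : ℕ, 1 ≤ N ∧ (N : ℤ) ≤ K ∧ αs (m + N) = αs m := by
  obtain ⟨m, N, hN, hNK, hperiod⟩ := browkin_periodic_of_consecutive_negative_norms_general
    (fun n ↦ (hbcf n).2.1) (fun n ↦ (hbcf n).2.2) hδ hΔ hΔpos (fun n ↦ (hrep n).2.1)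
    (fun n ↦ (hrep n).2.2) ht hK hn0 (fun n hn ↦ hneg n hn.le)
  exact ⟨m, N, hN, hNK.le, hperiod⟩
end
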